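/- Let K be a commutative ℚ-algebra and P ∈ K[X₁,…,Xₙ] homogeneous of degree ≥ 2 with (Hess P)³ = 0. Then the following three polynomials vanish: (i) Σ_{j,k=1}^{n} (D_jP)(D_jD_kP)(D_kP) = 0; (ii) Σ_{i,j,k=1}^{n} (D_iP)(D_iD_jP)(D_jD_kP)(D_kP) = 0; (iii) Σ_{i,j,k=1}^{n} (D_iP)(D_jP)(D_kP)(D_iD_jD_kP) = 0. -/

import Mathlib

/-!
Write `H` for the Hessian, `v` for the gradient of `P` and `x` for the vector of variables. Euler's
identity for the partial derivatives, which are homogeneous of degree `d - 1`, gives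
`H x = (d - 1) v` (`hessian_mulVec_X`), and `d - 1` is invertible over `ℚ`. Hence
`(d - 1) H² v = H³ x = 0`, so that `H² v = 0` (`hessian_mulVec_hessian_mulVec_grad`). The 4-chain is
`vᵀ H² v = 0`, and as `H` is symmetric, `d - 1` times the 3-chain is
`(H x)ᵀ H v = xᵀ H² v = 0`. Differentiating the vanishing 3-chain along `v` (applying
`∑ₖ vₖ Dₖ`) gives twice the 4-chain plus the 4-star, so the 4-star vanishes too.
-/

open MvPolynomial

/-- The Hessian matrix `(DᵢDⱼP)` of a multivariate polynomial. -/
noncomputable def hessian {n : ℕ} {K : Type*} [CommRing K]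
    (P : MvPolynomial (Fin n) K) :
    Matrix (Fin n) (Fin n) (MvPolynomial (Fin n) K) :=
  Matrix.of fun i j => pderiv i (pderiv j P)

open Matrix

lemma pderiv_pderiv_comm {σ K : Type*} [CommRing K] (i j : σ) (P : MvPolynomial σ K) :
    pderiv i (pderiv j P) = pderiv j (pderiv i P) := by
  classical
  -- The commutator of two derivations is a derivation, and this one kills every variable.
  have h : ⁅(pderiv i : Derivation K (MvPolynomial σ K) (MvPolynomial σ K)),
      (pderiv j : Derivation K (MvPolynomial σ K) (MvPolynomial σ K))⁆ = 0 := by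
    apply MvPolynomial.derivation_ext
    intro k
    simp only [Derivation.commutator_apply, pderiv_X, Derivation.coe_zero, Pi.zero_apply]
    by_cases hj : j = k <;> by_cases hi : i = k <;> simp [hj, hi, eq_comm]
  have h2 := congrArg (fun D => D P) h
  simpa [Derivation.commutator_apply, sub_eq_zero] using h2

lemma hessian_transpose {n : ℕ} {K : Type*} [CommRing K] (P : MvPolynomial (Fin n) K) :
    (hessian P)ᵀ = hessian P := by
  ext1 i j
  exact pderiv_pderiv_comm j i P

/-- Euler's identity for the gradient: `H x = (d - 1) v`. -/
lemma hessian_mulVec_X {n : ℕ} {K : Type*} [CommRing K] {d : ℕ}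
    {P : MvPolynomial (Fin n) K} (hP : P.IsHomogeneous d) :
    hessian P *ᵥ (fun i => X i) = (d - 1) • fun i => pderiv i P := by
  ext1 i
  rw [mulVec, dotProduct, Pi.smul_apply, ← (hP.pderiv (i := i)).sum_X_mul_pderiv]
  refine Finset.sum_congr rfl fun j _ => ?_
  rw [hessian, of_apply, pderiv_pderiv_comm, mul_comm]

lemma eq_zero_of_nsmul_eq_zero {K M : Type*} [CommRing K] [Algebra ℚ K] [AddCommGroup M]
    [Module K M] {m : ℕ} (hm : m ≠ 0) {a : M} (h : m • a = 0) : a = 0 := by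
  let _ : Module ℚ M := Module.compHom M (algebraMap ℚ K)
  rw [← Nat.cast_smul_eq_nsmul ℚ] at h
  exact (smul_eq_zero.mp h).resolve_left (Nat.cast_ne_zero.mpr hm)

/-- Since `v` is a rational multiple of `H x`, the hypothesis `H³ = 0` forces `H² v = 0`. -/
lemma hessian_mulVec_hessian_mulVec_grad {n : ℕ} {K : Type*} [CommRing K] [Algebra ℚ K]
    {d : ℕ} (hd : 2 ≤ d) {P : MvPolynomial (Fin n) K} (hP : P.IsHomogeneous d)
    (hnil : hessian P ^ 3 = 0) :
    hessian P *ᵥ (hessian P *ᵥ fun i => pderiv i P) = 0 := by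
  apply eq_zero_of_nsmul_eq_zero (K := K) (m := d - 1) (by omega)
  rw [← mulVec_smul, ← mulVec_smul, ← hessian_mulVec_X hP, mulVec_mulVec, mulVec_mulVec,
    ← pow_three', hnil, zero_mulVec]

/-- if `P` is homogeneous of degree `≥ 2` and `(Hess P)³ = 0`, then the
three tree polynomials for the 3-chain, 4-chain and 4-star vanish. -/
theorem tree_polynomials_vanish_of_hessian_cube_zero
    {n : ℕ} {K : Type*} [CommRing K] [Algebra ℚ K]
    (d : ℕ) (hd : 2 ≤ d) (P : MvPolynomial (Fin n) K) (hP : P.IsHomogeneous d)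
    (hnil : hessian P ^ 3 = 0) :
    (∑ j : Fin n, ∑ k : Fin n,
        pderiv j P * pderiv j (pderiv k P) * pderiv k P = 0) ∧
    (∑ i : Fin n, ∑ j : Fin n, ∑ k : Fin n,
        pderiv i P * pderiv i (pderiv j P) * pderiv j (pderiv k P) * pderiv k P = 0) ∧
    (∑ i : Fin n, ∑ j : Fin n, ∑ k : Fin n,
        pderiv i P * pderiv j P * pderiv k P * pderiv i (pderiv j (pderiv k P)) = 0) := by
  have hHHv := hessian_mulVec_hessian_mulVec_grad hd hP hnil
  have h3 : ∑ j : Fin n, ∑ k : Fin n,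
      pderiv j P * pderiv j (pderiv k P) * pderiv k P = 0 := by
    have h : (fun i => pderiv i P) ⬝ᵥ (hessian P *ᵥ fun i => pderiv i P) = 0 := by
      apply eq_zero_of_nsmul_eq_zero (K := K) (m := d - 1) (by omega)
      rw [← smul_dotProduct, ← hessian_mulVec_X hP, ← vecMul_transpose, hessian_transpose,
        ← dotProduct_mulVec, hHHv, dotProduct_zero]
    simpa only [dotProduct, mulVec, hessian, of_apply, Finset.mul_sum, mul_assoc] using h
  have h4 : ∑ i : Fin n, ∑ j : Fin n, ∑ k : Fin n,
      pderiv i P * pderiv i (pderiv j P) * pderiv j (pderiv k P) * pderiv k P = 0 := by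
    have h : (fun i => pderiv i P) ⬝ᵥ
        (hessian P *ᵥ (hessian P *ᵥ fun i => pderiv i P)) = 0 := by
      rw [hHHv, dotProduct_zero]
    simpa only [dotProduct, mulVec, hessian, of_apply, Finset.mul_sum, mul_assoc] using h
  refine ⟨h3, h4, ?_⟩
  -- Apply `∑ₖ vₖ Dₖ` to the 3-chain.
  have hD : ∑ k : Fin n, pderiv k P * pderiv k (∑ i : Fin n, ∑ j : Fin n,
      pderiv i P * pderiv i (pderiv j P) * pderiv j P) = 0 := by
    simp [h3]
  have hsplit : ∀ k i j : Fin n,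
      pderiv k P * pderiv k (pderiv i P * pderiv i (pderiv j P) * pderiv j P) =
        pderiv k P * pderiv i P * pderiv j P * pderiv k (pderiv i (pderiv j P)) +
        pderiv k P * pderiv k (pderiv i P) * pderiv i (pderiv j P) * pderiv j P +
        pderiv k P * pderiv k (pderiv j P) * pderiv j (pderiv i P) * pderiv i P := by
    intro k i j
    rw [pderiv_pderiv_comm j i, pderiv_mul, pderiv_mul]
    ring
  simp only [map_sum, Finset.mul_sum, hsplit, Finset.sum_add_distrib] at hD
  -- The last summand is the 4-chain with `i` and `j` interchanged.
  have hswap : ∑ k : Fin n, ∑ i : Fin n, ∑ j : Fin n,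
      pderiv k P * pderiv k (pderiv j P) * pderiv j (pderiv i P) * pderiv i P = 0 := by
    rw [← h4]
    exact Finset.sum_congr rfl fun k _ => Finset.sum_comm
  rw [h4, hswap, add_zero, add_zero] at hD
  exact hD
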